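/- Let (E,d_E) be a compact metric space, let p ≥ 1 and let n ∈ ℕ. For m ∈ ℕ, let h(m) = inf{ε > 0 : N(E,ε) ≤ m}, where N(E,ε) is the smallest cardinality of a set S ⊂ E such that every y ∈ E has distance at most ε from some point of S. Then (1/4) · max_{0 ≤ k ≤ ⌊log₂ n⌋} (2^k/n)^{1/(2p)} · h(2^k) ≤ sup_{μ ∈ 𝒫_p(E)} (𝔼[W_p(μ_n,μ)^p])^{1/p} ≤ 40p · ∑_{k=0}^{⌊log₂ n⌋} (2^k/n)^{1/(2p)} · h(2^k), where μ_n denotes the empirical measure of μ with sample size n. -/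

import Mathlib

open MeasureTheory ENNReal Filter

noncomputable section

/-- The `p`-Wasserstein distance between two measures on a metric space, as an
extended nonnegative real: the infimum over all couplings `γ` (measures on `E × E`
with the prescribed marginals) of `(∫ d(x,y)^p dγ)^(1/p)`. -/
def Wp {E : Type*} [MetricSpace E] [MeasurableSpace E] (p : ℝ) (μ ν : Measure E) : ℝ≥0∞ :=
  ⨅ γ ∈ {γ : Measure (E × E) | γ.map Prod.fst = μ ∧ γ.map Prod.snd = ν},
    (∫⁻ z, edist z.1 z.2 ^ p ∂γ) ^ (1 / p)

/-- The (uniform) discrete measure `(1/n) ∑ δ_{X i}`. -/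
def empiricalMeasure {E : Type*} [MeasurableSpace E] (n : ℕ) (X : Fin n → E) : Measure E :=
  (n : ℝ≥0∞)⁻¹ • ∑ i, Measure.dirac (X i)

/-- The law of `n` independent samples of `μ`. -/
def sampleMeasure {E : Type*} [MeasurableSpace E] (μ : Measure E) (n : ℕ) :
    Measure (Fin n → E) :=
  Measure.pi fun _ => μ

/-- `𝔼[W_p(μ_n, μ)]`, where `μ_n` is the empirical measure of `μ` with sample size `n`. -/
def expWp {E : Type*} [MetricSpace E] [MeasurableSpace E] (p : ℝ) (μ : Measure E) (n : ℕ) :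
    ℝ≥0∞ :=
  ∫⁻ X, Wp p (empiricalMeasure n X) μ ∂(sampleMeasure μ n)

/-- `(𝔼[W_p(μ_n, μ)^p])^{1/p}`, where `μ_n` is the empirical measure of `μ` with
sample size `n`. -/
def expWpPow {E : Type*} [MetricSpace E] [MeasurableSpace E] (p : ℝ) (μ : Measure E) (n : ℕ) :
    ℝ≥0∞ :=
  (∫⁻ X, (Wp p (empiricalMeasure n X) μ) ^ p ∂(sampleMeasure μ n)) ^ (1 / p)

/-- The optimal uniform quantization error
`b_{n,p}(μ) = inf_{x₁,…,x_n} W_p(μ, (1/n) ∑ δ_{x_i})`. -/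
def unifQuantErr {E : Type*} [MetricSpace E] [MeasurableSpace E] (p : ℝ) (n : ℕ)
    (μ : Measure E) : ℝ≥0∞ :=
  ⨅ x : Fin n → E, Wp p μ (empiricalMeasure n x)

/-- The optimal quantization error `e_{n,p}(μ)`: the infimum of `W_p(μ, ν)` over all
probability measures `ν` supported on at most `n` points. -/
def quantErr {E : Type*} [MetricSpace E] [MeasurableSpace E] (p : ℝ) (n : ℕ)
    (μ : Measure E) : ℝ≥0∞ :=
  ⨅ ν ∈ {ν : Measure E | IsProbabilityMeasure ν ∧
      ∃ S : Finset E, S.card ≤ n ∧ ν (↑S : Set E)ᶜ = 0}, Wp p μ ν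

/-- `μ` has a finite `p`-th moment: `∫ d(x, x₀)^p dμ(x) < ∞` for some `x₀`. -/
def HasFiniteMoment {E : Type*} [MetricSpace E] [MeasurableSpace E] (p : ℝ)
    (μ : Measure E) : Prop :=
  ∃ x₀ : E, ∫⁻ x, edist x x₀ ^ p ∂μ ≠ ∞

end

/-- `h(m) = inf {ε > 0 : N(E, ε) ≤ m}`, where `N(E, ε)` is the `ε`-covering number of
`E`, i.e. the smallest cardinality of a set `S ⊆ E` such that every `y ∈ E` has
distance at most `ε` from some point of `S`. (Stated directly: the infimum of all
`ε > 0` admitting a covering set of cardinality at most `m`.) -/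
noncomputable def covRadius (E : Type*) [MetricSpace E] (m : ℕ) : ℝ :=
  sInf {ε : ℝ | 0 < ε ∧ ∃ S : Finset E, S.card ≤ m ∧ ∀ y : E, ∃ x ∈ S, dist y x ≤ ε}

/-!
For the lower bound, let `μ` be uniform on `m + 1` points at mutual distance at least `r`, where
`m = 2 ^ k` and `r < h(m)`. Any coupling of `μ_n` and `μ` must move the excess mass of `μ_n` at each
of these points over a distance at least `r`. The expected excess is half of the mean absolute
deviation of a binomial variable, which is bounded below through its second and fourth moments.

For the upper bound, projecting successively onto nets of sizes `2 ^ K, …, 2, 1`, where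
`K = ⌊log₂ n⌋`, gives partitions each refining the previous one. Couple `μ_n` and `μ` greedily:
first inside the cells of the finest partition, then couple what is left inside coarser and coarser
cells. The mass carried across the cells of the `k`-th partition is at most
`∑_A (μ_n(A) - μ(A))⁺`, whose expectation is at most `√(2 ^ k / n)` by Cauchy-Schwarz. Chaining
along the partitions and Minkowski's inequality then give the sum over scales.
-/

open ProbabilityTheory

section Moments

variable {Ω : Type*} {mΩ : MeasurableSpace Ω} {P : Measure Ω}

theorem integral_max_zero_of_integral_eq_zero {Z : Ω → ℝ} (hZ : Integrable Z P)
    (hZ0 : ∫ ω, Z ω ∂P = 0) : ∫ ω, max (Z ω) 0 ∂P = (∫ ω, |Z ω| ∂P) / 2 := by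
  have hmax : ∀ ω, max (Z ω) 0 = (|Z ω| + Z ω) / 2 := fun ω => by
    rcases le_total (Z ω) 0 with h | h <;> simp [h, abs_of_nonneg, abs_of_nonpos]
  simp only [hmax]
  rw [integral_div, integral_add hZ.abs hZ, hZ0, add_zero]

theorem integrable_pow_of_memLp [IsFiniteMeasure P] {Z : Ω → ℝ} {q : ℝ≥0∞} (hZ : MemLp Z q P)
    {k : ℕ} (hk : k ≤ q) : Integrable (fun ω => Z ω ^ k) P := by
  refine (integrable_norm_iff (hZ.aestronglyMeasurable.pow k)).1 ?_
  simpa only [Pi.pow_apply, norm_pow] using (hZ.mono_exponent hk).integrable_norm_pow'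

variable [IsProbabilityMeasure P]

/-- The tangent-line trick behind Lyapunov's inequality: `t⁴ - 3s²t² + 2s³t = t(t - s)²(t + 2s)`
is nonnegative for `t = |Z|`. -/
theorem integral_sq_le_mul_integral_abs {Z : Ω → ℝ} (hZ : MemLp Z 4 P) {s : ℝ} (hs : 0 < s)
    (h4 : ∫ ω, Z ω ^ 4 ∂P ≤ s ^ 2 * ∫ ω, Z ω ^ 2 ∂P) :
    ∫ ω, Z ω ^ 2 ∂P ≤ s * ∫ ω, |Z ω| ∂P := by
  have hpoint : ∀ ω, 3 * s ^ 2 * Z ω ^ 2 - Z ω ^ 4 ≤ 2 * s ^ 3 * |Z ω| := fun ω => by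
    have h : 0 ≤ |Z ω| * (|Z ω| - s) ^ 2 * (|Z ω| + 2 * s) := by positivity
    rw [← sq_abs (Z ω), ← (Even.pow_abs (by decide) (Z ω) : |Z ω| ^ 4 = Z ω ^ 4)]
    linarith
  have i1 : Integrable (fun ω => |Z ω|) P := (hZ.integrable (by norm_num)).abs
  have i2 := integrable_pow_of_memLp hZ (k := 2) (by norm_num)
  have i4 := integrable_pow_of_memLp hZ (k := 4) le_rfl
  have hint := integral_mono ((i2.const_mul (3 * s ^ 2)).sub i4) (i1.const_mul (2 * s ^ 3)) hpoint
  simp only [Pi.sub_apply] at hint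
  rw [integral_sub (i2.const_mul _) i4, integral_const_mul, integral_const_mul] at hint
  refine le_of_mul_le_mul_left ?_ (show 0 < 2 * s ^ 2 by positivity)
  linarith

theorem integral_add_pow_four_of_indepFun {X Y : Ω → ℝ} (hXY : X ⟂ᵢ[P] Y) (hX : MemLp X 4 P)
    (hY : MemLp Y 4 P) (hX0 : ∫ ω, X ω ∂P = 0) (hY0 : ∫ ω, Y ω ∂P = 0) :
    ∫ ω, (X ω + Y ω) ^ 4 ∂P =
      ∫ ω, X ω ^ 4 ∂P + 6 * ((∫ ω, X ω ^ 2 ∂P) * ∫ ω, Y ω ^ 2 ∂P) + ∫ ω, Y ω ^ 4 ∂P := by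
  have hindep : ∀ j k : ℕ, (fun ω => X ω ^ j) ⟂ᵢ[P] (fun ω => Y ω ^ k) := fun j k =>
    hXY.comp (φ := (· ^ j)) (ψ := (· ^ k)) (by fun_prop) (by fun_prop)
  have hint : ∀ j ≤ 4, ∀ k ≤ 4, Integrable (fun ω => X ω ^ j * Y ω ^ k) P := fun j hj k hk =>
    (hindep j k).integrable_mul (integrable_pow_of_memLp hX (by exact_mod_cast hj))
      (integrable_pow_of_memLp hY (by exact_mod_cast hk))
  have hmul : ∀ j k : ℕ, ∫ ω, X ω ^ j * Y ω ^ k ∂P = (∫ ω, X ω ^ j ∂P) * ∫ ω, Y ω ^ k ∂P :=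
    fun j k => (hindep j k).integral_fun_mul_eq_mul_integral
      (hX.aestronglyMeasurable.pow j) (hY.aestronglyMeasurable.pow k)
  have hbinom : ∀ ω, (X ω + Y ω) ^ 4 =
      ∑ j ∈ Finset.range 5, X ω ^ j * Y ω ^ (4 - j) * (Nat.choose 4 j : ℝ) :=
    fun ω => add_pow (X ω) (Y ω) 4
  simp only [hbinom]
  rw [integral_finsetSum _ fun j hj =>
    (hint j (by have := Finset.mem_range.1 hj; omega) _ (by omega)).mul_const _]
  simp [integral_mul_const, hmul, Finset.sum_range_succ, hX0, hY0, Nat.choose]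
  ring

theorem integral_sum_sq_of_iIndepFun {ι : Type*} {Y : ι → Ω → ℝ} (hY : iIndepFun Y P)
    (hm : ∀ i, MemLp (Y i) 2 P) (h0 : ∀ i, ∫ ω, Y i ω ∂P = 0) (s : Finset ι) :
    ∫ ω, (∑ i ∈ s, Y i ω) ^ 2 ∂P = ∑ i ∈ s, ∫ ω, Y i ω ^ 2 ∂P := by
  have hsum0 : ∫ ω, (∑ i ∈ s, Y i) ω ∂P = 0 := by
    simp only [Finset.sum_apply]
    rw [integral_finsetSum _ fun i _ => (hm i).integrable one_le_two, Finset.sum_eq_zero]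
    exact fun i _ => h0 i
  have hvar := IndepFun.variance_sum (s := s) (fun i _ => hm i) fun i _ j _ hij => hY.indepFun hij
  rw [variance_of_integral_eq_zero (memLp_finsetSum' s fun i _ => hm i).aemeasurable hsum0,
    Finset.sum_congr rfl fun i _ => variance_of_integral_eq_zero (hm i).aemeasurable (h0 i)] at hvar
  simpa using hvar

theorem integral_sum_pow_four_le_of_iIndepFun {ι : Type*} {Y : ι → Ω → ℝ} (hY : iIndepFun Y P)
    (hm : ∀ i, MemLp (Y i) 4 P) (h0 : ∀ i, ∫ ω, Y i ω ∂P = 0) (s : Finset ι) :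
    ∫ ω, (∑ i ∈ s, Y i ω) ^ 4 ∂P ≤
      ∑ i ∈ s, ∫ ω, Y i ω ^ 4 ∂P + 3 * (∑ i ∈ s, ∫ ω, Y i ω ^ 2 ∂P) ^ 2 := by
  classical
  induction s using Finset.induction_on with
  | empty => simp
  | insert a s ha ih =>
    have hindep : (Y a) ⟂ᵢ[P] (fun ω => ∑ i ∈ s, Y i ω) := by
      simpa [Finset.sum_fn] using
        (hY.indepFun_finsetSum_of_notMem₀ (fun i => (hm i).aemeasurable) ha).symm
    have hsum0 : ∫ ω, ∑ i ∈ s, Y i ω ∂P = 0 := by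
      rw [integral_finsetSum _ fun i _ => (hm i).integrable (by norm_num), Finset.sum_eq_zero]
      exact fun i _ => h0 i
    simp only [Finset.sum_insert ha]
    rw [integral_add_pow_four_of_indepFun hindep (hm a) (memLp_finsetSum s fun i _ => hm i)
      (h0 a) hsum0,
      integral_sum_sq_of_iIndepFun hY (fun i => (hm i).mono_exponent (by norm_num)) h0]
    nlinarith [sq_nonneg (∫ ω, Y a ω ^ 2 ∂P)]

theorem sqrt_le_two_mul_integral_abs_sum {ι : Type*} {Y : ι → Ω → ℝ} (hY : iIndepFun Y P)
    (hm : ∀ i, AEStronglyMeasurable (Y i) P) {b : ℝ} (hb : ∀ i ω, |Y i ω| ≤ b)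
    (h0 : ∀ i, ∫ ω, Y i ω ∂P = 0) (s : Finset ι)
    (hV : b ^ 2 ≤ ∑ i ∈ s, ∫ ω, Y i ω ^ 2 ∂P) :
    √(∑ i ∈ s, ∫ ω, Y i ω ^ 2 ∂P) ≤ 2 * ∫ ω, |∑ i ∈ s, Y i ω| ∂P := by
  set V := ∑ i ∈ s, ∫ ω, Y i ω ^ 2 ∂P
  have hm4 : ∀ i, MemLp (Y i) 4 P := fun i => .of_bound (hm i) b (.of_forall (hb i))
  have hV2 : ∫ ω, (∑ i ∈ s, Y i ω) ^ 2 ∂P = V :=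
    integral_sum_sq_of_iIndepFun hY (fun i => (hm4 i).mono_exponent (by norm_num)) h0 s
  rcases (show 0 ≤ V from (sq_nonneg b).trans hV).eq_or_lt with hV0 | hV0
  · rw [← hV0, Real.sqrt_zero]; positivity
  have hfourth : ∑ i ∈ s, ∫ ω, Y i ω ^ 4 ∂P ≤ V * V := calc
    _ ≤ ∑ i ∈ s, b ^ 2 * ∫ ω, Y i ω ^ 2 ∂P := by
        refine Finset.sum_le_sum fun i _ => ?_
        rw [← integral_const_mul]
        refine integral_mono (integrable_pow_of_memLp (k := 4) (hm4 i) le_rfl)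
          ((integrable_pow_of_memLp (k := 2) (hm4 i) (by norm_num)).const_mul _) fun ω => ?_
        have hsq : Y i ω ^ 2 ≤ b ^ 2 := sq_le_sq.2 ((hb i ω).trans (le_abs_self b))
        nlinarith [sq_nonneg (Y i ω)]
    _ = b ^ 2 * V := by rw [Finset.mul_sum]
    _ ≤ V * V := by gcongr
  have hlyapunov := integral_sq_le_mul_integral_abs (Z := fun ω => ∑ i ∈ s, Y i ω)
    (s := 2 * √V) (memLp_finsetSum s fun i _ => hm4 i) (by positivity) <| by
      rw [hV2, mul_pow, Real.sq_sqrt hV0.le]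
      linarith [integral_sum_pow_four_le_of_iIndepFun hY hm4 h0 s]
  rw [hV2] at hlyapunov
  nth_rewrite 1 [← Real.mul_self_sqrt hV0.le] at hlyapunov
  exact le_of_mul_le_mul_left (by linarith) (Real.sqrt_pos.2 hV0)

end Moments

section EmpiricalMeasure

variable {E : Type*} [MeasurableSpace E]

theorem isProbabilityMeasure_empiricalMeasure {n : ℕ} (hn : 1 ≤ n) (X : Fin n → E) :
    IsProbabilityMeasure (empiricalMeasure n X) where
  measure_univ := by
    simp [empiricalMeasure, ENNReal.inv_mul_cancel, show n ≠ 0 by omega]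

instance isProbabilityMeasure_sampleMeasure (μ : Measure E) [IsProbabilityMeasure μ] (n : ℕ) :
    IsProbabilityMeasure (sampleMeasure μ n) :=
  inferInstanceAs (IsProbabilityMeasure (Measure.pi _))

theorem empiricalMeasure_real_apply {A : Set E} (hA : MeasurableSet A) {n : ℕ} (X : Fin n → E) :
    (empiricalMeasure n X).real A = (∑ i, A.indicator 1 (X i)) / n := by
  simp only [empiricalMeasure, measureReal_ennreal_smul_apply, toReal_inv, toReal_natCast]
  rw [measureReal_def, Measure.finsetSum_apply, toReal_sum fun i _ => measure_ne_top _ _,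
    div_eq_inv_mul]
  refine congrArg _ (Finset.sum_congr rfl fun i _ => ?_)
  by_cases h : X i ∈ A <;> simp [Measure.dirac_apply' _ hA, h]

theorem measurable_empiricalMeasure_apply {A : Set E} (hA : MeasurableSet A) (n : ℕ) :
    Measurable fun X : Fin n → E => empiricalMeasure n X A := by
  simp only [empiricalMeasure, Measure.smul_apply, Measure.finsetSum_apply,
    Measure.dirac_apply' _ hA, smul_eq_mul]
  exact (Finset.measurable_sum _ fun i _ =>
    (measurable_const.indicator hA).comp (measurable_pi_apply i)).const_mul _

variable (μ : Measure E) (A : Set E)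

/-- The centred indicator `1_A - μ(A)`, whose averages over samples of `μ` are the deviations of
the empirical measure from `μ` on `A`. -/
noncomputable def centeredIndicator (x : E) : ℝ := A.indicator 1 x - μ.real A

/-- The deviation `μ_n(A) - μ(A)` of the empirical measure at the sample `X`. -/
noncomputable def empiricalError (n : ℕ) (X : Fin n → E) : ℝ :=
  (empiricalMeasure n X).real A - μ.real A

variable {A}

theorem empiricalError_eq_sum (hA : MeasurableSet A) {n : ℕ} (hn : 1 ≤ n) (X : Fin n → E) :
    empiricalError μ A n X = (∑ i, centeredIndicator μ A (X i)) / n := by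
  have hn' : (n : ℝ) ≠ 0 := by positivity
  simp only [empiricalError, centeredIndicator, empiricalMeasure_real_apply hA,
    Finset.sum_sub_distrib, Finset.sum_const, Finset.card_univ, Fintype.card_fin, nsmul_eq_mul]
  field_simp

theorem empiricalMeasure_sub_eq_ofReal [IsFiniteMeasure μ] {n : ℕ} (hn : 1 ≤ n)
    (X : Fin n → E) :
    empiricalMeasure n X A - μ A = ENNReal.ofReal (max (empiricalError μ A n X) 0) := by
  have := isProbabilityMeasure_empiricalMeasure hn X
  rw [ofReal_max, ENNReal.ofReal_zero, max_eq_left zero_le, empiricalError,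
    ENNReal.ofReal_sub _ measureReal_nonneg, ofReal_measureReal, ofReal_measureReal]

theorem measurable_centeredIndicator (hA : MeasurableSet A) : Measurable (centeredIndicator μ A) :=
  (measurable_const.indicator hA).sub_const _

variable [IsProbabilityMeasure μ]

theorem integral_comp_eval_sampleMeasure {n : ℕ} {g : E → ℝ} (hg : AEStronglyMeasurable g μ)
    (i : Fin n) :
    ∫ X, g (X i) ∂(sampleMeasure μ n) = ∫ x, g x ∂μ :=
  integral_comp_eval (μ := fun _ => μ) hg

theorem integral_centeredIndicator (hA : MeasurableSet A) :
    ∫ x, centeredIndicator μ A x ∂μ = 0 := by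
  simp only [centeredIndicator]
  rw [integral_sub ((integrable_const 1).indicator hA) (integrable_const _),
    integral_indicator_one hA]
  simp

theorem integral_centeredIndicator_sq (hA : MeasurableSet A) :
    ∫ x, centeredIndicator μ A x ^ 2 ∂μ = μ.real A * (1 - μ.real A) := by
  have hsq : ∀ x, centeredIndicator μ A x ^ 2 =
      (1 - 2 * μ.real A) * A.indicator 1 x + μ.real A ^ 2 := fun x => by
    by_cases h : x ∈ A <;> simp [centeredIndicator, h]; ring
  simp only [hsq]
  rw [integral_add (((integrable_const 1).indicator hA).const_mul _) (integrable_const _),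
    integral_const_mul, integral_indicator_one hA]
  simp
  ring

theorem abs_centeredIndicator_le (x : E) :
    |centeredIndicator μ A x| ≤ max (μ.real A) (1 - μ.real A) := by
  have h0 : 0 ≤ μ.real A := measureReal_nonneg
  have h1 : μ.real A ≤ 1 := measureReal_le_one
  by_cases h : x ∈ A <;> simp [centeredIndicator, h, abs_of_nonneg, h0, h1]

theorem memLp_centeredIndicator_eval (hA : MeasurableSet A) {n : ℕ} (i : Fin n) (q : ℝ≥0∞) :
    MemLp (fun X : Fin n → E => centeredIndicator μ A (X i)) q (sampleMeasure μ n) :=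
  .of_bound ((measurable_centeredIndicator μ hA).comp (measurable_pi_apply i)).aestronglyMeasurable
    _ (.of_forall fun X => abs_centeredIndicator_le μ (X i))

theorem iIndepFun_centeredIndicator_eval (hA : MeasurableSet A) (n : ℕ) :
    iIndepFun (fun (i : Fin n) (X : Fin n → E) => centeredIndicator μ A (X i))
      (sampleMeasure μ n) :=
  iIndepFun_pi fun _ => (measurable_centeredIndicator μ hA).aemeasurable

theorem integral_centeredIndicator_eval (hA : MeasurableSet A) {n : ℕ} (i : Fin n) :
    ∫ X, centeredIndicator μ A (X i) ∂(sampleMeasure μ n) = 0 := by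
  rw [integral_comp_eval_sampleMeasure μ (measurable_centeredIndicator μ hA).aestronglyMeasurable,
    integral_centeredIndicator μ hA]

theorem sum_integral_centeredIndicator_eval_sq (hA : MeasurableSet A) (n : ℕ) :
    ∑ i : Fin n, ∫ X, centeredIndicator μ A (X i) ^ 2 ∂(sampleMeasure μ n) =
      n * (μ.real A * (1 - μ.real A)) := by
  simp only [integral_comp_eval_sampleMeasure μ
    ((measurable_centeredIndicator μ hA).pow_const 2).aestronglyMeasurable,
    integral_centeredIndicator_sq μ hA, Finset.sum_const, Finset.card_univ, Fintype.card_fin,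
    nsmul_eq_mul]

theorem memLp_empiricalError (hA : MeasurableSet A) {n : ℕ} (hn : 1 ≤ n) (q : ℝ≥0∞) :
    MemLp (empiricalError μ A n) q (sampleMeasure μ n) := by
  simp only [funext (empiricalError_eq_sum μ hA hn), div_eq_mul_inv]
  exact (memLp_finsetSum _ fun i _ => memLp_centeredIndicator_eval μ hA i q).mul_const _

theorem integral_empiricalError (hA : MeasurableSet A) {n : ℕ} (hn : 1 ≤ n) :
    ∫ X, empiricalError μ A n X ∂(sampleMeasure μ n) = 0 := by
  simp only [empiricalError_eq_sum μ hA hn]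
  rw [integral_div, integral_finsetSum _ fun i _ =>
    (memLp_centeredIndicator_eval μ hA i 1).integrable le_rfl]
  simp [integral_centeredIndicator_eval μ hA]

theorem integral_empiricalError_sq (hA : MeasurableSet A) {n : ℕ} (hn : 1 ≤ n) :
    ∫ X, empiricalError μ A n X ^ 2 ∂(sampleMeasure μ n) = μ.real A * (1 - μ.real A) / n := by
  simp only [empiricalError_eq_sum μ hA hn, div_pow]
  rw [integral_div, integral_sum_sq_of_iIndepFun (iIndepFun_centeredIndicator_eval μ hA n)
    (fun i => memLp_centeredIndicator_eval μ hA i 2) (integral_centeredIndicator_eval μ hA),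
    sum_integral_centeredIndicator_eval_sq μ hA]
  field_simp

theorem integral_abs_empiricalError_le (hA : MeasurableSet A) {n : ℕ} (hn : 1 ≤ n) :
    ∫ X, |empiricalError μ A n X| ∂(sampleMeasure μ n) ≤ √(μ.real A / n) := by
  have hsq : (∫ X, |empiricalError μ A n X| ∂(sampleMeasure μ n)) ^ 2 ≤
      ∫ X, |empiricalError μ A n X| ^ 2 ∂(sampleMeasure μ n) := by
    have hvar := variance_nonneg |empiricalError μ A n| (sampleMeasure μ n)
    rw [variance_eq_sub (memLp_empiricalError μ hA hn 2).abs] at hvar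
    simpa using hvar
  refine Real.le_sqrt_of_sq_le (hsq.trans ?_)
  simp only [sq_abs]
  rw [integral_empiricalError_sq μ hA hn]
  gcongr
  exact mul_le_of_le_one_right measureReal_nonneg (sub_le_self _ measureReal_nonneg)

theorem sqrt_le_two_mul_integral_abs_empiricalError (hA : MeasurableSet A) {n : ℕ} (hn : 1 ≤ n)
    (hle : μ.real A ≤ 1 / 2) (hge : 1 ≤ (n + 1) * μ.real A) :
    √(μ.real A * (1 - μ.real A) / n) ≤
      2 * ∫ X, |empiricalError μ A n X| ∂(sampleMeasure μ n) := by
  have hn' : (0 : ℝ) < n := by exact_mod_cast hn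
  have hsum := sqrt_le_two_mul_integral_abs_sum (b := 1 - μ.real A)
    (iIndepFun_centeredIndicator_eval μ hA n)
    (fun i => (memLp_centeredIndicator_eval μ hA i 1).aestronglyMeasurable)
    (fun i X => (abs_centeredIndicator_le μ (X i)).trans (max_le (by linarith) le_rfl))
    (integral_centeredIndicator_eval μ hA) Finset.univ (by
      rw [sum_integral_centeredIndicator_eval_sq μ hA]
      nlinarith)
  rw [sum_integral_centeredIndicator_eval_sq μ hA] at hsum
  simp only [empiricalError_eq_sum μ hA hn, abs_div, Nat.abs_cast]
  rw [integral_div, mul_div_assoc', le_div_iff₀ hn']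
  refine le_trans (le_of_eq ?_) hsum
  rw [← Real.sqrt_sq hn'.le, ← Real.sqrt_mul' _ (sq_nonneg _), Real.sqrt_sq hn'.le]
  congr 1
  field_simp

theorem lintegral_empiricalMeasure_sub (hA : MeasurableSet A) {n : ℕ} (hn : 1 ≤ n) :
    ∫⁻ X, (empiricalMeasure n X A - μ A) ∂(sampleMeasure μ n) =
      ENNReal.ofReal ((∫ X, |empiricalError μ A n X| ∂(sampleMeasure μ n)) / 2) := by
  have hint := (memLp_empiricalError μ hA hn 1).integrable le_rfl
  simp only [empiricalMeasure_sub_eq_ofReal μ hn]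
  rw [← ofReal_integral_eq_lintegral_ofReal hint.pos_part (.of_forall fun X => le_max_right _ _),
    integral_max_zero_of_integral_eq_zero hint (integral_empiricalError μ hA hn)]

theorem ofReal_sqrt_le_lintegral_empiricalMeasure_sub (hA : MeasurableSet A) {n : ℕ} (hn : 1 ≤ n)
    (hle : μ.real A ≤ 1 / 2) (hge : 1 ≤ (n + 1) * μ.real A) :
    ENNReal.ofReal (√(μ.real A * (1 - μ.real A) / n) / 4) ≤
      ∫⁻ X, (empiricalMeasure n X A - μ A) ∂(sampleMeasure μ n) := by
  rw [lintegral_empiricalMeasure_sub μ hA hn]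
  refine ofReal_le_ofReal ?_
  linarith [sqrt_le_two_mul_integral_abs_empiricalError μ hA hn hle hge]

theorem sum_lintegral_empiricalMeasure_sub_le {ι : Type*} {S : Finset ι} {A : ι → Set E}
    (hA : ∀ c ∈ S, MeasurableSet (A c)) (hd : (S : Set ι).PairwiseDisjoint A) {n : ℕ}
    (hn : 1 ≤ n) :
    ∑ c ∈ S, ∫⁻ X, (empiricalMeasure n X (A c) - μ (A c)) ∂(sampleMeasure μ n) ≤
      ENNReal.ofReal (√(S.card / n)) := by
  have hcell : ∀ c ∈ S, ∫⁻ X, (empiricalMeasure n X (A c) - μ (A c)) ∂(sampleMeasure μ n) ≤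
      ENNReal.ofReal √(μ.real (A c) / n) := fun c hc => by
    rw [lintegral_empiricalMeasure_sub μ (hA c hc) hn]
    exact ofReal_le_ofReal <| (half_le_self (by positivity)).trans
      (integral_abs_empiricalError_le μ (hA c hc) hn)
  have hmass : ∑ c ∈ S, μ.real (A c) ≤ 1 := by
    rw [← measureReal_biUnion_finset hd hA]
    exact measureReal_le_one
  refine (Finset.sum_le_sum hcell).trans ?_
  rw [← ofReal_sum_of_nonneg fun c _ => Real.sqrt_nonneg _]
  refine ofReal_le_ofReal ?_
  calc ∑ c ∈ S, √(μ.real (A c) / n)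
      = ∑ c ∈ S, √(1 / n) * √(μ.real (A c)) := by
        simp only [div_eq_mul_one_div (μ.real _), mul_comm (μ.real _),
          Real.sqrt_mul (show (0 : ℝ) ≤ 1 / n by positivity)]
    _ ≤ √(∑ c ∈ S, 1 / n) * √(∑ c ∈ S, μ.real (A c)) :=
        Real.sum_sqrt_mul_sqrt_le _ (fun _ => by positivity) fun _ => measureReal_nonneg
    _ ≤ √(S.card / n) := by
        refine mul_le_of_le_one_right (Real.sqrt_nonneg _) (Real.sqrt_le_one.2 hmass) |>.trans ?_
        simp [div_eq_mul_inv]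

end EmpiricalMeasure

section CoveringRadius

variable (E : Type*) [MetricSpace E]

theorem covRadius_nonneg (m : ℕ) : 0 ≤ covRadius E m :=
  Real.sInf_nonneg fun _ h => h.1.le

variable {E}

theorem exists_far_of_lt_covRadius {m : ℕ} {r : ℝ} (hr0 : 0 < r) (hr : r < covRadius E m)
    {S : Finset E} (hS : S.card ≤ m) : ∃ y, ∀ x ∈ S, r < dist y x := by
  by_contra! hcover
  exact hr.not_ge (csInf_le ⟨0, fun _ h => h.1.le⟩ ⟨hr0, S, hS, hcover⟩)

theorem exists_separated_of_lt_covRadius {m : ℕ} {r : ℝ} (hr0 : 0 < r)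
    (hr : r < covRadius E m) :
    ∀ j ≤ m + 1, ∃ S : Finset E, S.card = j ∧ (S : Set E).Pairwise fun x y => r ≤ dist x y
  | 0, _ => ⟨∅, by simp⟩
  | j + 1, hj => by
    classical
    obtain ⟨S, hcard, hsep⟩ := exists_separated_of_lt_covRadius hr0 hr j (by omega)
    obtain ⟨y, hy⟩ := exists_far_of_lt_covRadius hr0 hr (S := S) (by omega)
    have hyS : y ∉ S := fun h => hr0.not_gt (by simpa using hy y h)
    refine ⟨insert y S, by rw [Finset.card_insert_of_notMem hyS, hcard], ?_⟩
    rw [Finset.coe_insert]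
    refine hsep.insert fun x hx _ => ⟨(hy x hx).le, ?_⟩
    rw [dist_comm]
    exact (hy x hx).le

theorem exists_finset_cover_of_covRadius_lt [BoundedSpace E] {m : ℕ} (hm : 1 ≤ m) {r : ℝ}
    (hr : covRadius E m < r) : ∃ S : Finset E, S.card ≤ m ∧ ∀ y, ∃ x ∈ S, dist y x ≤ r := by
  have hne : {ε : ℝ | 0 < ε ∧ ∃ S : Finset E, S.card ≤ m ∧
      ∀ y, ∃ x ∈ S, dist y x ≤ ε}.Nonempty := by
    rcases isEmpty_or_nonempty E with hE | ⟨⟨x₀⟩⟩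
    · exact ⟨1, one_pos, ∅, by simp, isEmptyElim⟩
    · refine ⟨Metric.diam (Set.univ : Set E) + 1, by positivity, {x₀}, by simpa using hm,
        fun y => ⟨x₀, Finset.mem_singleton_self x₀, ?_⟩⟩
      linarith [Metric.dist_le_diam_of_mem (Bornology.IsBounded.all Set.univ) (Set.mem_univ y)
        (Set.mem_univ x₀)]
  obtain ⟨ε, ⟨_, S, hS, hcover⟩, hε⟩ := exists_lt_of_csInf_lt hne hr
  refine ⟨S, hS, fun y => ?_⟩
  obtain ⟨x, hx, hyx⟩ := hcover y
  exact ⟨x, hx, hyx.trans hε.le⟩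

end CoveringRadius

section Atoms

variable {E : Type*} [MeasurableSpace E] [MeasurableSingletonClass E]

theorem sum_map_fst_sub_map_snd_le_offDiag (γ : Measure (E × E)) {S : Finset E}
    (hS : γ.map Prod.snd (S : Set E)ᶜ = 0) :
    ∑ x ∈ S, (γ.map Prod.fst {x} - γ.map Prod.snd {x}) ≤ γ (S : Set E).offDiag := by
  classical
  let B : E → Set (E × E) := fun x => {x} ×ˢ (S.erase x : Set E)
  have hB : ∀ x, MeasurableSet (B x) := fun x =>
    (measurableSet_singleton x).prod (S.erase x).measurableSet
  have hdisj : (S : Set E).PairwiseDisjoint B := fun x _ y _ hxy =>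
    Set.disjoint_prod.2 (.inl (Set.disjoint_singleton.2 hxy))
  have hcell : ∀ x ∈ S, γ.map Prod.fst {x} - γ.map Prod.snd {x} ≤ γ (B x) := fun x hx => by
    have hcover : Prod.fst ⁻¹' {x} ⊆
        (B x ∪ Prod.snd ⁻¹' {x}) ∪ Prod.snd ⁻¹' (S : Set E)ᶜ := by
      rintro ⟨a, b⟩ rfl
      by_cases hb : b ∈ S <;> by_cases hab : b = a <;> simp [B, hb, hab]
    rw [Measure.map_apply measurable_snd S.measurableSet.compl] at hS
    rw [tsub_le_iff_right, Measure.map_apply measurable_fst (measurableSet_singleton x),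
      Measure.map_apply measurable_snd (measurableSet_singleton x)]
    calc γ (Prod.fst ⁻¹' {x}) ≤ γ (B x ∪ Prod.snd ⁻¹' {x}) + γ (Prod.snd ⁻¹' (S : Set E)ᶜ) :=
          (measure_mono hcover).trans (measure_union_le _ _)
      _ ≤ γ (B x) + γ (Prod.snd ⁻¹' {x}) := by
          rw [hS, add_zero]
          exact measure_union_le _ _
  refine (Finset.sum_le_sum hcell).trans ?_
  rw [← measure_biUnion_finset hdisj fun x _ => hB x]
  refine measure_mono (Set.iUnion₂_subset fun x hx => ?_)
  rintro ⟨a, b⟩ ⟨rfl, hb⟩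
  obtain ⟨hne, hb⟩ := Finset.mem_erase.1 (Finset.mem_coe.1 hb)
  exact ⟨hx, hb, hne.symm⟩

theorem uniformOn_real_singleton {S : Finset E} {x : E} (hx : x ∈ S) :
    (uniformOn (S : Set E)).real {x} = (S.card : ℝ)⁻¹ := by
  rw [measureReal_def, uniformOn, cond_apply S.measurableSet, Measure.count_apply_finset,
    Set.inter_eq_self_of_subset_right (Set.singleton_subset_iff.2 (Finset.mem_coe.2 hx)),
    Measure.count_singleton]
  simp

theorem ofReal_sqrt_le_lintegral_sum_empiricalMeasure_sub_uniformOn {m n : ℕ} (hm : 1 ≤ m)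
    (hmn : m ≤ n) {S : Finset E} (hS : S.card = m + 1) :
    ENNReal.ofReal (√(m / n) / 4) ≤
      ∫⁻ X, ∑ x ∈ S, (empiricalMeasure n X {x} - uniformOn (S : Set E) {x})
        ∂(sampleMeasure (uniformOn (S : Set E)) n) := by
  have : IsProbabilityMeasure (uniformOn (S : Set E)) :=
    isProbabilityMeasure_uniformOn S.finite_toSet (Finset.card_pos.1 (by omega))
  have hm' : (1 : ℝ) ≤ m := by exact_mod_cast hm
  have hmn' : (m : ℝ) ≤ n := by exact_mod_cast hmn
  have hq : ∀ x ∈ S, (uniformOn (S : Set E)).real {x} = 1 / (m + 1) := fun x hx => by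
    rw [uniformOn_real_singleton hx, hS, one_div]
    push_cast
    rfl
  have hatom : ∀ x ∈ S, ENNReal.ofReal (√(m / n) / (m + 1) / 4) ≤
      ∫⁻ X, (empiricalMeasure n X {x} - uniformOn (S : Set E) {x})
        ∂(sampleMeasure (uniformOn (S : Set E)) n) := fun x hx => by
    have h := ofReal_sqrt_le_lintegral_empiricalMeasure_sub (uniformOn (S : Set E))
      (measurableSet_singleton x) (hm.trans hmn)
      (by rw [hq x hx]; gcongr; linarith) (by rw [hq x hx, mul_one_div, one_le_div] <;> linarith)
    rw [hq x hx] at h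
    convert h using 3
    rw [div_eq_iff (by positivity), ← Real.sqrt_sq (show (0 : ℝ) ≤ m + 1 by positivity),
      ← Real.sqrt_mul' _ (sq_nonneg _), Real.sqrt_sq (by positivity)]
    congr 1
    field_simp
    ring
  rw [lintegral_finsetSum _ fun x _ =>
    (measurable_empiricalMeasure_apply (measurableSet_singleton x) n).sub_const _]
  refine le_trans (le_of_eq ?_) (Finset.sum_le_sum hatom)
  rw [Finset.sum_const, hS, nsmul_eq_mul, ← ofReal_natCast, ← ofReal_mul (by positivity)]
  congr 1
  push_cast
  field_simp

end Atoms

section LowerBound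

variable {E : Type*} [MetricSpace E] [MeasurableSpace E] {p : ℝ}

theorem le_Wp_rpow (hp : 0 < p) {μ ν : Measure E} {c : ℝ≥0∞}
    (h : ∀ γ : Measure (E × E), γ.map Prod.fst = μ → γ.map Prod.snd = ν →
      c ≤ ∫⁻ z, edist z.1 z.2 ^ p ∂γ) : c ≤ Wp p μ ν ^ p := by
  refine (rpow_inv_le_iff hp).1 (le_iInf₂ fun γ hγ => ?_)
  rw [one_div]
  exact rpow_le_rpow (h γ hγ.1 hγ.2) (by positivity)

theorem hasFiniteMoment_of_boundedSpace [BoundedSpace E] (hp : 0 ≤ p) (μ : Measure E)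
    [IsProbabilityMeasure μ] : HasFiniteMoment p μ := by
  obtain ⟨x₀⟩ := nonempty_of_isProbabilityMeasure μ
  refine ⟨x₀, ne_top_of_le_ne_top (b := Metric.ediam (Set.univ : Set E) ^ p) ?_ ?_⟩
  · exact rpow_ne_top_of_nonneg hp (Bornology.IsBounded.all Set.univ).ediam_ne_top
  · calc ∫⁻ x, edist x x₀ ^ p ∂μ ≤ ∫⁻ _, Metric.ediam (Set.univ : Set E) ^ p ∂μ :=
        lintegral_mono fun x =>
          rpow_le_rpow (Metric.edist_le_ediam_of_mem (Set.mem_univ x) (Set.mem_univ x₀)) hp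
      _ = _ := by simp

variable [MeasurableSingletonClass E]

theorem ofReal_rpow_mul_sum_sub_le_Wp_rpow (hp : 0 < p)
    {μ ν : Measure E} {S : Finset E} (hμ : μ (S : Set E)ᶜ = 0) {r : ℝ}
    (hsep : (S : Set E).Pairwise fun x y => r ≤ dist x y) :
    ENNReal.ofReal r ^ p * ∑ x ∈ S, (ν {x} - μ {x}) ≤ Wp p ν μ ^ p := by
  refine le_Wp_rpow hp ?_
  rintro γ rfl rfl
  have hoff : MeasurableSet (S : Set E).offDiag := S.finite_toSet.offDiag.measurableSet
  calc ENNReal.ofReal r ^ p * ∑ x ∈ S, (γ.map Prod.fst {x} - γ.map Prod.snd {x})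
      ≤ ENNReal.ofReal r ^ p * γ (S : Set E).offDiag := by
        gcongr
        exact sum_map_fst_sub_map_snd_le_offDiag γ hμ
    _ = ∫⁻ _ in (S : Set E).offDiag, ENNReal.ofReal r ^ p ∂γ := (setLIntegral_const _ _).symm
    _ ≤ ∫⁻ z in (S : Set E).offDiag, edist z.1 z.2 ^ p ∂γ := by
        refine setLIntegral_mono' hoff fun z hz => rpow_le_rpow ?_ hp.le
        rw [edist_dist]
        exact ofReal_le_ofReal (hsep hz.1 hz.2.1 hz.2.2)
    _ ≤ ∫⁻ z, edist z.1 z.2 ^ p ∂γ := setLIntegral_le_lintegral _ _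

theorem ofReal_mul_le_expWpPow_uniformOn (hp : 1 ≤ p) {m n : ℕ} (hm : 1 ≤ m) (hmn : m ≤ n)
    {S : Finset E} (hS : S.card = m + 1) {r : ℝ} (hr : 0 ≤ r)
    (hsep : (S : Set E).Pairwise fun x y => r ≤ dist x y) :
    ENNReal.ofReal (1 / 4 * ((m / n : ℝ) ^ (1 / (2 * p)) * r)) ≤
      expWpPow p (uniformOn (S : Set E)) n := by
  have hp0 : 0 < p := by linarith
  have hsupp : uniformOn (S : Set E) (S : Set E)ᶜ = 0 :=
    (uniformOn_eq_zero_iff S.finite_toSet).2 (Set.inter_compl_self _)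
  have hquarter : (1 / 4 : ℝ) ≤ (1 / 4) ^ (1 / p) :=
    Real.self_le_rpow_of_le_one (by norm_num) (by norm_num) ((div_le_one hp0).2 hp)
  rw [expWpPow, one_div p, le_rpow_inv_iff hp0]
  calc ENNReal.ofReal (1 / 4 * ((m / n : ℝ) ^ (1 / (2 * p)) * r)) ^ p
      ≤ ENNReal.ofReal ((1 / 4) ^ (1 / p) * ((m / n : ℝ) ^ (1 / (2 * p)) * r)) ^ p := by gcongr
    _ = ENNReal.ofReal r ^ p * ENNReal.ofReal (√(m / n) / 4) := by
        rw [ofReal_rpow_of_nonneg (by positivity) hp0.le, ofReal_rpow_of_nonneg hr hp0.le,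
          ← ofReal_mul (by positivity), Real.mul_rpow (by positivity) (by positivity),
          Real.mul_rpow (by positivity) hr, ← Real.rpow_mul (by positivity),
          ← Real.rpow_mul (by positivity), Real.sqrt_eq_rpow, one_div_mul_cancel hp0.ne',
          show 1 / (2 * p) * p = 1 / 2 by field_simp, Real.rpow_one]
        ring_nf
    _ ≤ ENNReal.ofReal r ^ p *
          ∫⁻ X, ∑ x ∈ S, (empiricalMeasure n X {x} - uniformOn (S : Set E) {x})
            ∂(sampleMeasure (uniformOn (S : Set E)) n) := by
        gcongr
        exact ofReal_sqrt_le_lintegral_sum_empiricalMeasure_sub_uniformOn hm hmn hS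
    _ ≤ ∫⁻ X, Wp p (empiricalMeasure n X) (uniformOn (S : Set E)) ^ p
          ∂(sampleMeasure (uniformOn (S : Set E)) n) := by
        rw [← lintegral_const_mul' _ _ (rpow_ne_top_of_nonneg hp0.le ofReal_ne_top)]
        exact lintegral_mono fun X => ofReal_rpow_mul_sum_sub_le_Wp_rpow hp0 hsupp hsep

theorem ofReal_mul_covRadius_le_iSup_expWpPow [BoundedSpace E] (hp : 1 ≤ p) {m n : ℕ} (hm : 1 ≤ m)
    (hmn : m ≤ n) :
    ENNReal.ofReal (1 / 4 * ((m / n : ℝ) ^ (1 / (2 * p)) * covRadius E m)) ≤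
      ⨆ μ : {μ : Measure E // IsProbabilityMeasure μ ∧ HasFiniteMoment p μ}, expWpPow p μ.1 n := by
  rcases (covRadius_nonneg E m).eq_or_lt with h0 | h0
  · simp [← h0]
  have hcont : Continuous fun r : ℝ =>
      ENNReal.ofReal (1 / 4 * ((m / n : ℝ) ^ (1 / (2 * p)) * r)) :=
    continuous_ofReal.comp (by fun_prop)
  refine le_of_tendsto ((hcont.tendsto (covRadius E m)).mono_left
    (nhdsWithin_le_nhds (s := Set.Iio (covRadius E m)))) ?_
  filter_upwards [Ioo_mem_nhdsLT h0] with r hr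
  obtain ⟨S, hS, hsep⟩ := exists_separated_of_lt_covRadius hr.1 hr.2 (m + 1) le_rfl
  have : IsProbabilityMeasure (uniformOn (S : Set E)) :=
    isProbabilityMeasure_uniformOn S.finite_toSet (Finset.card_pos.1 (by omega))
  exact (ofReal_mul_le_expWpPow_uniformOn hp hm hmn hS hr.1.le hsep).trans <|
    le_iSup_of_le ⟨uniformOn (S : Set E), this, hasFiniteMoment_of_boundedSpace (by linarith) _⟩
      le_rfl

end LowerBound

section Coupling

variable {E F ι : Type*} [MeasurableSpace E] [MeasurableSpace F]

/-- The product of `α` and `β` rescaled to have mass `min (α univ) (β univ)`: a coupling of parts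
of `α` and `β` of the largest possible mass. It is zero when `α = β = 0`. -/
noncomputable def minProd (α : Measure E) (β : Measure F) : Measure (E × F) :=
  (max (α Set.univ) (β Set.univ))⁻¹ • α.prod β

section MinProd

variable (α : Measure E) (β : Measure F)

theorem map_fst_minProd_le [SFinite β] : (minProd α β).map Prod.fst ≤ α := by
  rw [minProd, Measure.map_smul, Measure.map_fst_prod, smul_smul]
  refine Measure.le_iff'.2 fun A => ?_
  calc (max (α Set.univ) (β Set.univ))⁻¹ * β Set.univ * α A
      ≤ (max (α Set.univ) (β Set.univ))⁻¹ * max (α Set.univ) (β Set.univ) * α A := by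
        gcongr
        exact le_max_right _ _
    _ ≤ α A := mul_le_of_le_one_left zero_le (ENNReal.inv_mul_le_one _)

theorem map_snd_minProd_le [SFinite α] [SFinite β] : (minProd α β).map Prod.snd ≤ β := by
  have hswap : (minProd α β).map Prod.snd = (minProd β α).map Prod.fst := by
    rw [minProd, minProd, Measure.map_smul, Measure.map_smul, Measure.map_fst_prod,
      Measure.map_snd_prod, max_comm]
  rw [hswap]
  exact map_fst_minProd_le β α

variable [IsFiniteMeasure α] [IsFiniteMeasure β]

theorem minProd_univ : minProd α β Set.univ = min (α Set.univ) (β Set.univ) := by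
  rw [minProd, Measure.smul_apply, smul_eq_mul, ← Set.univ_prod_univ, Measure.prod_prod]
  rcases eq_or_ne (max (α Set.univ) (β Set.univ)) 0 with h0 | h0
  · simp [(max_eq_zero.1 h0).1]
  · rw [← max_mul_min (α Set.univ), ← mul_assoc,
      ENNReal.inv_mul_cancel h0 (max_lt (measure_lt_top _ _) (measure_lt_top _ _)).ne, one_mul]

instance isFiniteMeasure_minProd : IsFiniteMeasure (minProd α β) :=
  ⟨(minProd_univ α β).trans_lt (min_lt_of_left_lt (measure_lt_top α _))⟩

theorem exists_coupling_of_measure_univ_eq (hmass : α Set.univ = β Set.univ) :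
    ∃ γ : Measure (E × F), γ.map Prod.fst = α ∧ γ.map Prod.snd = β := by
  refine ⟨minProd α β, Measure.eq_of_le_of_measure_univ_eq (map_fst_minProd_le α β) ?_,
    Measure.eq_of_le_of_measure_univ_eq (map_snd_minProd_le α β) ?_⟩
  · rw [Measure.map_apply measurable_fst .univ, Set.preimage_univ, minProd_univ, hmass, min_self]
  · rw [Measure.map_apply measurable_snd .univ, Set.preimage_univ, minProd_univ, hmass, min_self]

end MinProd

/-- A sequence of finite measurable partitions of `E`, each refining the previous one. The `k`-th
partition consists of the fibres of `label k`. -/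
structure RefiningPartitions (E ι : Type*) [MeasurableSpace E] where
  label : ℕ → E → ι
  labels : ℕ → Finset ι
  label_mem : ∀ k x, label k x ∈ labels k
  measurableSet_fiber : ∀ k c, MeasurableSet (label k ⁻¹' {c})
  refines : ∀ k x y, label (k + 1) x = label (k + 1) y → label k x = label k y

namespace RefiningPartitions

variable (Q : RefiningPartitions E ι)

/-- The mass by which `α` exceeds `β` on the cells of the `k`-th partition. -/
noncomputable def excess (k : ℕ) (α β : Measure E) : ℝ≥0∞ :=
  ∑ c ∈ Q.labels k, (α (Q.label k ⁻¹' {c}) - β (Q.label k ⁻¹' {c}))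

/-- A partial coupling of `α` and `β` moving as much mass as possible inside the cells of the
`k`-th partition. -/
noncomputable def cellCoupling (k : ℕ) (α β : Measure E) : Measure (E × E) :=
  ∑ c ∈ Q.labels k,
    minProd (α.restrict (Q.label k ⁻¹' {c})) (β.restrict (Q.label k ⁻¹' {c}))

theorem pairwiseDisjoint_fiber (k : ℕ) :
    (Q.labels k : Set ι).PairwiseDisjoint fun c => Q.label k ⁻¹' {c} := fun _ _ _ _ h =>
  (Set.disjoint_singleton.2 h).preimage _

theorem biUnion_fiber (k : ℕ) : ⋃ c ∈ Q.labels k, Q.label k ⁻¹' {c} = Set.univ :=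
  Set.eq_univ_of_forall fun x => Set.mem_biUnion (Q.label_mem k x) rfl

theorem sum_restrict_fiber (k : ℕ) (α : Measure E) :
    ∑ c ∈ Q.labels k, α.restrict (Q.label k ⁻¹' {c}) = α := by
  rw [← Finset.sum_coe_sort, ← Measure.sum_fintype, ← Measure.restrict_biUnion_finset
    (Q.pairwiseDisjoint_fiber k) (Q.measurableSet_fiber k), Q.biUnion_fiber, Measure.restrict_univ]

theorem measurableSet_label_ne (k : ℕ) :
    MeasurableSet {z : E × E | Q.label k z.1 ≠ Q.label k z.2} := by
  have hdiag : {z : E × E | Q.label k z.1 = Q.label k z.2} =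
      ⋃ c ∈ Q.labels k, (Q.label k ⁻¹' {c}) ×ˢ (Q.label k ⁻¹' {c}) := by
    ext z
    simp only [Set.mem_iUnion₂]
    exact ⟨fun h => ⟨_, Q.label_mem k z.2, h, rfl⟩, fun ⟨_, _, h1, h2⟩ => h1.trans h2.symm⟩
  have hmeas : MeasurableSet {z : E × E | Q.label k z.1 = Q.label k z.2} := by
    rw [hdiag]
    exact (Q.labels k).measurableSet_biUnion fun c _ =>
      (Q.measurableSet_fiber k c).prod (Q.measurableSet_fiber k c)
  exact hmeas.compl

theorem measurable_excess_empiricalMeasure (k : ℕ) (μ : Measure E) (n : ℕ) :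
    Measurable fun X : Fin n → E => Q.excess k (empiricalMeasure n X) μ :=
  Finset.measurable_sum _ fun c _ =>
    (measurable_empiricalMeasure_apply (Q.measurableSet_fiber k c) n).sub_const _

theorem lintegral_excess_empiricalMeasure_le (k : ℕ) (μ : Measure E) [IsProbabilityMeasure μ]
    {n : ℕ} (hn : 1 ≤ n) :
    ∫⁻ X, Q.excess k (empiricalMeasure n X) μ ∂(sampleMeasure μ n) ≤
      ENNReal.ofReal √((Q.labels k).card / n) := by
  simp only [excess]
  rw [lintegral_finsetSum _ fun c _ =>
    (measurable_empiricalMeasure_apply (Q.measurableSet_fiber k c) n).sub_const _]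
  exact sum_lintegral_empiricalMeasure_sub_le μ (fun c _ => Q.measurableSet_fiber k c)
    (Q.pairwiseDisjoint_fiber k) hn

variable (α β : Measure E)

theorem label_eq_of_le {j k : ℕ} (hjk : j ≤ k) {x y : E} (h : Q.label k x = Q.label k y) :
    Q.label j x = Q.label j y := by
  induction k, hjk using Nat.le_induction with
  | base => exact h
  | succ k _ ih => exact ih (Q.refines k x y h)

theorem cellCoupling_label_ne [SFinite α] [SFinite β] {j k : ℕ} (hjk : j ≤ k) :
    Q.cellCoupling k α β {z | Q.label j z.1 ≠ Q.label j z.2} = 0 := by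
  rw [cellCoupling, Measure.finsetSum_apply, Finset.sum_eq_zero]
  intro c _
  have hc := Q.measurableSet_fiber k c
  rw [minProd, Measure.smul_apply, smul_eq_mul, Measure.prod_restrict,
    Measure.restrict_apply' (hc.prod hc)]
  have hempty : {z : E × E | Q.label j z.1 ≠ Q.label j z.2} ∩
      (Q.label k ⁻¹' {c}) ×ˢ (Q.label k ⁻¹' {c}) = ∅ :=
    Set.eq_empty_of_forall_notMem fun z ⟨hne, h1, h2⟩ =>
      hne (Q.label_eq_of_le hjk (h1.trans h2.symm))
  rw [hempty, measure_empty, mul_zero]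

theorem map_fst_cellCoupling_le [SFinite β] (k : ℕ) :
    (Q.cellCoupling k α β).map Prod.fst ≤ α := by
  conv_rhs => rw [← Q.sum_restrict_fiber k α]
  rw [cellCoupling, Measure.map_finset_sum measurable_fst.aemeasurable]
  exact Finset.sum_le_sum fun c _ => map_fst_minProd_le _ _

theorem map_snd_cellCoupling_le [SFinite α] [SFinite β] (k : ℕ) :
    (Q.cellCoupling k α β).map Prod.snd ≤ β := by
  conv_rhs => rw [← Q.sum_restrict_fiber k β]
  rw [cellCoupling, Measure.map_finset_sum measurable_snd.aemeasurable]
  exact Finset.sum_le_sum fun c _ => map_snd_minProd_le _ _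

variable [IsFiniteMeasure α] [IsFiniteMeasure β]

theorem univ_sub_cellCoupling_univ_le_excess (k : ℕ) :
    α Set.univ - Q.cellCoupling k α β Set.univ ≤ Q.excess k α β := by
  rw [tsub_le_iff_right]
  conv_lhs => rw [← Q.sum_restrict_fiber k α]
  simp only [cellCoupling, excess, Measure.finsetSum_apply, minProd_univ,
    Measure.restrict_apply_univ, ← Finset.sum_add_distrib, tsub_add_min, le_refl]

instance isFiniteMeasure_cellCoupling (k : ℕ) : IsFiniteMeasure (Q.cellCoupling k α β) where
  measure_univ_lt_top := by
    rw [cellCoupling, Measure.finsetSum_apply]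
    exact sum_lt_top.2 fun c _ => measure_lt_top _ _

theorem excess_sub_cellCoupling {j k : ℕ} (hjk : j ≤ k) :
    Q.excess j (α - (Q.cellCoupling k α β).map Prod.fst) (β - (Q.cellCoupling k α β).map Prod.snd)
      = Q.excess j α β := by
  refine Finset.sum_congr rfl fun c _ => ?_
  have hc := Q.measurableSet_fiber j c
  have hae : Prod.fst ⁻¹' (Q.label j ⁻¹' {c}) =ᵐ[Q.cellCoupling k α β]
      (Prod.snd ⁻¹' (Q.label j ⁻¹' {c}) : Set (E × E)) := by
    filter_upwards [ae_iff.2 (Q.cellCoupling_label_ne α β hjk)] with z hz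
    exact congrArg (· = c) hz
  have hmarg : (Q.cellCoupling k α β).map Prod.fst (Q.label j ⁻¹' {c}) =
      (Q.cellCoupling k α β).map Prod.snd (Q.label j ⁻¹' {c}) := by
    rw [Measure.map_apply measurable_fst hc, Measure.map_apply measurable_snd hc,
      measure_congr hae]
  rw [Measure.sub_apply hc (Q.map_fst_cellCoupling_le α β k),
    Measure.sub_apply hc (Q.map_snd_cellCoupling_le α β k), hmarg,
    tsub_tsub_tsub_cancel_right (Q.map_snd_cellCoupling_le α β k _)]

/-- Couple as much as possible within the finest partition, then couple what is left by means of
the coarser partitions: the mass coupled first does not affect the excesses. -/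
theorem exists_coupling_label_ne_le_excess (K : ℕ) (α β : Measure E) [IsFiniteMeasure α]
    [IsFiniteMeasure β] (hmass : α Set.univ = β Set.univ) :
    ∃ γ : Measure (E × E), γ.map Prod.fst = α ∧ γ.map Prod.snd = β ∧
      ∀ k < K, γ {z | Q.label k z.1 ≠ Q.label k z.2} ≤ Q.excess k α β := by
  induction K generalizing α β with
  | zero =>
    obtain ⟨γ, hfst, hsnd⟩ := exists_coupling_of_measure_univ_eq α β hmass
    exact ⟨γ, hfst, hsnd, by simp⟩
  | succ K ih =>
    set γ₀ := Q.cellCoupling K α β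
    have hα := Q.map_fst_cellCoupling_le α β K
    have hβ := Q.map_snd_cellCoupling_le α β K
    have hα_univ : (α - γ₀.map Prod.fst) Set.univ = α Set.univ - γ₀ Set.univ := by
      rw [Measure.sub_apply .univ hα, Measure.map_apply measurable_fst .univ, Set.preimage_univ]
    have hβ_univ : (β - γ₀.map Prod.snd) Set.univ = β Set.univ - γ₀ Set.univ := by
      rw [Measure.sub_apply .univ hβ, Measure.map_apply measurable_snd .univ, Set.preimage_univ]
    obtain ⟨γ₁, hfst, hsnd, hγ₁⟩ := ih (α - γ₀.map Prod.fst) (β - γ₀.map Prod.snd)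
      (by rw [hα_univ, hβ_univ, hmass])
    refine ⟨γ₁ + γ₀, ?_, ?_, fun k hk => ?_⟩
    · rw [Measure.map_add _ _ measurable_fst, hfst, Measure.sub_add_cancel_of_le hα]
    · rw [Measure.map_add _ _ measurable_snd, hsnd, Measure.sub_add_cancel_of_le hβ]
    have hkK := Nat.lt_succ_iff.1 hk
    rw [Measure.add_apply, Q.cellCoupling_label_ne α β hkK, add_zero]
    rcases hkK.eq_or_lt with rfl | hlt
    · calc γ₁ {z | Q.label k z.1 ≠ Q.label k z.2} ≤ γ₁ Set.univ := measure_mono (Set.subset_univ _)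
        _ = α Set.univ - γ₀ Set.univ := by
          rw [← hα_univ, ← hfst, Measure.map_apply measurable_fst .univ, Set.preimage_univ]
        _ ≤ Q.excess k α β := Q.univ_sub_cellCoupling_univ_le_excess α β k
    · exact (hγ₁ k hlt).trans_eq (Q.excess_sub_cellCoupling α β hkK)

end RefiningPartitions

end Coupling

section Chaining

/-- The bound on a Wasserstein distance given by chaining along partitions of mesh `R 0, …, R K`
when `v k` is the mass transported across cells of the `k`-th partition. -/
noncomputable def chainingBound (p : ℝ) (R : ℕ → ℝ≥0∞) (K : ℕ) (v : ℕ → ℝ≥0∞) : ℝ≥0∞ :=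
  2 * R K + ∑ k ∈ Finset.range K, 2 * R k * v (k + 1) ^ (1 / p)

variable {p : ℝ} {R : ℕ → ℝ≥0∞} {K : ℕ}

theorem chainingBound_mono (hp : 0 ≤ p) {v w : ℕ → ℝ≥0∞} (h : ∀ k ≤ K, v k ≤ w k) :
    chainingBound p R K v ≤ chainingBound p R K w := by
  refine add_le_add_right (Finset.sum_le_sum fun k hk => ?_) _
  gcongr
  exact h _ (Finset.mem_range.1 hk)

theorem lintegral_sum_mul_rpow_le {Ω ι : Type*} [MeasurableSpace Ω] {P : Measure Ω}
    (hp : 1 ≤ p) (s : Finset ι) (c : ι → ℝ≥0∞) {g : ι → Ω → ℝ≥0∞} (hg : ∀ i, Measurable (g i)) :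
    (∫⁻ ω, (∑ i ∈ s, c i * g i ω ^ (1 / p)) ^ p ∂P) ^ (1 / p) ≤
      ∑ i ∈ s, c i * (∫⁻ ω, g i ω ∂P) ^ (1 / p) := by
  classical
  have hp0 : 0 < p := by linarith
  have hterm : ∀ i, Measurable fun ω => c i * g i ω ^ (1 / p) := fun i =>
    ((hg i).pow_const _).const_mul _
  have hnorm : ∀ i, (∫⁻ ω, (c i * g i ω ^ (1 / p)) ^ p ∂P) ^ (1 / p) =
      c i * (∫⁻ ω, g i ω ∂P) ^ (1 / p) := fun i => by
    simp only [mul_rpow_of_nonneg _ _ hp0.le, one_div, rpow_inv_rpow hp0.ne']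
    rw [lintegral_const_mul _ (hg i), mul_rpow_of_nonneg _ _ (by positivity), rpow_rpow_inv hp0.ne']
  induction s using Finset.induction_on with
  | empty => simp [hp0]
  | insert a s ha ih =>
    simp only [Finset.sum_insert ha]
    exact (lintegral_Lp_add_le (hterm a).aemeasurable
      (Finset.measurable_sum s fun i _ => hterm i).aemeasurable hp).trans
      (add_le_add (hnorm a).le ih)

theorem lintegral_chainingBound_rpow_le {Ω : Type*} [MeasurableSpace Ω] {P : Measure Ω}
    [IsProbabilityMeasure P] (hp : 1 ≤ p) {v : ℕ → Ω → ℝ≥0∞} (hv : ∀ k, Measurable (v k)) :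
    (∫⁻ ω, chainingBound p R K (fun k => v k ω) ^ p ∂P) ^ (1 / p) ≤
      chainingBound p R K fun k => ∫⁻ ω, v k ω ∂P := by
  have hp0 : p ≠ 0 := by linarith
  calc (∫⁻ ω, chainingBound p R K (fun k => v k ω) ^ p ∂P) ^ (1 / p)
      ≤ (∫⁻ _, (2 * R K) ^ p ∂P) ^ (1 / p) +
          (∫⁻ ω, (∑ k ∈ Finset.range K, 2 * R k * v (k + 1) ω ^ (1 / p)) ^ p ∂P) ^ (1 / p) :=
        lintegral_Lp_add_le measurable_const.aemeasurable (Finset.measurable_sum _ fun k _ =>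
          ((hv (k + 1)).pow_const _).const_mul _).aemeasurable hp
    _ ≤ chainingBound p R K fun k => ∫⁻ ω, v k ω ∂P := by
        rw [lintegral_const, measure_univ, mul_one, one_div, rpow_rpow_inv hp0, ← one_div]
        exact add_le_add_right (lintegral_sum_mul_rpow_le hp _ _ fun k => hv (k + 1)) _

section Metric

variable {E : Type*} [MetricSpace E]

theorem edist_le_sum_indicator {t : ℕ → E → E} (hroot : ∀ x y, t 0 x = t 0 y) :
    ∀ {K : ℕ}, (∀ k < K, ∀ x, edist (t (k + 1) x) (t k x) ≤ R k) → ∀ x y,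
      edist (t K x) (t K y) ≤ ∑ k ∈ Finset.range K,
        2 * R k * {z : E × E | t (k + 1) z.1 ≠ t (k + 1) z.2}.indicator 1 (x, y)
  | 0, _, x, y => by simp [hroot x y]
  | K + 1, hstep, x, y => by
    by_cases hxy : t (K + 1) x = t (K + 1) y
    · simp [hxy]
    rw [Finset.sum_range_succ, Set.indicator_of_mem (by exact hxy), Pi.one_apply, mul_one]
    calc edist (t (K + 1) x) (t (K + 1) y)
        ≤ edist (t (K + 1) x) (t K x) + edist (t K x) (t K y) + edist (t K y) (t (K + 1) y) :=
          edist_triangle4 _ _ _ _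
      _ ≤ R K + (∑ k ∈ Finset.range K, 2 * R k *
            {z : E × E | t (k + 1) z.1 ≠ t (k + 1) z.2}.indicator 1 (x, y)) + R K := by
          gcongr
          · exact hstep K K.lt_succ_self x
          · exact edist_le_sum_indicator hroot (fun k hk => hstep k (hk.trans K.lt_succ_self)) x y
          · rw [edist_comm]
            exact hstep K K.lt_succ_self y
      _ = _ := by ring

theorem edist_le_chainingBound_indicator (hp : 0 < p) {t : ℕ → E → E}
    (hroot : ∀ x y, t 0 x = t 0 y) (hstep : ∀ k < K, ∀ x, edist (t (k + 1) x) (t k x) ≤ R k)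
    (hlast : ∀ x, edist x (t K x) ≤ R K) (x y : E) :
    edist x y ≤ chainingBound p R K fun k =>
      {z : E × E | t k z.1 ≠ t k z.2}.indicator 1 (x, y) := by
  have hindicator : ∀ s : Set (E × E),
      (s.indicator 1 (x, y) : ℝ≥0∞) ^ (1 / p) = s.indicator 1 (x, y) := fun s => by
    by_cases h : (x, y) ∈ s <;> simp [h, hp]
  simp only [chainingBound, hindicator]
  calc edist x y ≤ edist x (t K x) + edist (t K x) (t K y) + edist (t K y) y :=
        edist_triangle4 _ _ _ _
    _ ≤ R K + (∑ k ∈ Finset.range K, 2 * R k *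
          {z : E × E | t (k + 1) z.1 ≠ t (k + 1) z.2}.indicator 1 (x, y)) + R K := by
        gcongr
        · exact hlast x
        · exact edist_le_sum_indicator hroot hstep x y
        · rw [edist_comm]
          exact hlast y
    _ = _ := by ring

variable [MeasurableSpace E]

theorem Wp_le_of_coupling {μ ν : Measure E} {γ : Measure (E × E)} (hfst : γ.map Prod.fst = μ)
    (hsnd : γ.map Prod.snd = ν) : Wp p μ ν ≤ (∫⁻ z, edist z.1 z.2 ^ p ∂γ) ^ (1 / p) :=
  iInf₂_le γ ⟨hfst, hsnd⟩

variable (Q : RefiningPartitions E E)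

theorem Wp_le_chainingBound_excess (hp : 1 ≤ p) (hroot : ∀ x y, Q.label 0 x = Q.label 0 y)
    (hstep : ∀ k < K, ∀ x, edist (Q.label (k + 1) x) (Q.label k x) ≤ R k)
    (hlast : ∀ x, edist x (Q.label K x) ≤ R K) (μ ν : Measure E) [IsProbabilityMeasure μ]
    [IsProbabilityMeasure ν] :
    Wp p μ ν ≤ chainingBound p R K fun k => Q.excess k μ ν := by
  obtain ⟨γ, hfst, hsnd, hγ⟩ := Q.exists_coupling_label_ne_le_excess (K + 1) μ ν (by simp)
  have : IsProbabilityMeasure γ := ⟨by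
    rw [← Set.preimage_univ (f := Prod.fst), ← Measure.map_apply measurable_fst .univ, hfst,
      measure_univ]⟩
  have hp0 : 0 < p := by linarith
  calc Wp p μ ν ≤ (∫⁻ z, edist z.1 z.2 ^ p ∂γ) ^ (1 / p) := Wp_le_of_coupling hfst hsnd
    _ ≤ (∫⁻ z, (chainingBound p R K fun k =>
          {z : E × E | Q.label k z.1 ≠ Q.label k z.2}.indicator 1 z) ^ p ∂γ) ^ (1 / p) := by
        gcongr with z
        exact edist_le_chainingBound_indicator hp0 hroot hstep hlast z.1 z.2
    _ ≤ chainingBound p R K fun k =>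
          ∫⁻ z, {z : E × E | Q.label k z.1 ≠ Q.label k z.2}.indicator 1 z ∂γ :=
        lintegral_chainingBound_rpow_le hp fun k =>
          measurable_one.indicator (Q.measurableSet_label_ne k)
    _ ≤ chainingBound p R K fun k => Q.excess k μ ν := by
        refine chainingBound_mono hp0.le fun k hk => ?_
        rw [lintegral_indicator_one (Q.measurableSet_label_ne k)]
        exact hγ k (Nat.lt_succ_of_le hk)

theorem expWpPow_le_chainingBound (hp : 1 ≤ p) (hroot : ∀ x y, Q.label 0 x = Q.label 0 y)
    (hstep : ∀ k < K, ∀ x, edist (Q.label (k + 1) x) (Q.label k x) ≤ R k)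
    (hlast : ∀ x, edist x (Q.label K x) ≤ R K) (μ : Measure E) [IsProbabilityMeasure μ] {n : ℕ}
    (hn : 1 ≤ n) :
    expWpPow p μ n ≤
      chainingBound p R K fun k => ENNReal.ofReal √((Q.labels k).card / n) := by
  have hp0 : 0 < p := by linarith
  calc expWpPow p μ n
      ≤ (∫⁻ X, chainingBound p R K (fun k => Q.excess k (empiricalMeasure n X) μ) ^ p
          ∂(sampleMeasure μ n)) ^ (1 / p) := by
        rw [expWpPow]
        gcongr with X
        have := isProbabilityMeasure_empiricalMeasure hn X
        exact Wp_le_chainingBound_excess Q hp hroot hstep hlast _ μ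
    _ ≤ chainingBound p R K fun k =>
          ∫⁻ X, Q.excess k (empiricalMeasure n X) μ ∂(sampleMeasure μ n) :=
        lintegral_chainingBound_rpow_le hp fun k => Q.measurable_excess_empiricalMeasure k μ n
    _ ≤ _ := chainingBound_mono hp0.le fun k _ => Q.lintegral_excess_empiricalMeasure_le k μ hn

end Metric

end Chaining

section Nets

variable {E : Type*}

/-- The map `f k ∘ f (k + 1) ∘ ⋯ ∘ f (k + j)`. -/
def composeFrom (f : ℕ → E → E) : ℕ → ℕ → E → E
  | k, 0 => f k
  | k, j + 1 => f k ∘ composeFrom f (k + 1) j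

theorem composeFrom_mem {f : ℕ → E → E} {S : ℕ → Finset E} (hS : ∀ k x, f k x ∈ S k) (k : ℕ) :
    ∀ j x, composeFrom f k j x ∈ S k
  | 0, x => hS k x
  | _ + 1, _ => hS k _

theorem composeFrom_min_sub_of_lt (f : ℕ → E → E) {k K : ℕ} (hk : k < K) :
    composeFrom f (min k K) (K - k) = f k ∘ composeFrom f (min (k + 1) K) (K - (k + 1)) := by
  rw [min_eq_left hk.le, min_eq_left (Nat.succ_le_of_lt hk), show K - k = K - (k + 1) + 1 by omega,
    composeFrom]

variable [MeasurableSpace E]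

theorem measurable_composeFrom {f : ℕ → E → E} (hf : ∀ k, Measurable (f k)) :
    ∀ k j, Measurable (composeFrom f k j)
  | k, 0 => hf k
  | k, j + 1 => (hf k).comp (measurable_composeFrom hf (k + 1) j)

/-- The partitions obtained by projecting onto the net `S K` and then successively onto the coarser
nets `S (K - 1), …, S 0`. The levels above `K` repeat the level `K`. -/
def netPartitions [MeasurableSingletonClass E] {f : ℕ → E → E} {S : ℕ → Finset E}
    (hf : ∀ k, Measurable (f k)) (hS : ∀ k x, f k x ∈ S k) (K : ℕ) : RefiningPartitions E E where
  label k := composeFrom f (min k K) (K - k)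
  labels k := S (min k K)
  label_mem k := composeFrom_mem hS _ _
  measurableSet_fiber _ c := measurable_composeFrom hf _ _ (measurableSet_singleton c)
  refines k x y h := by
    rcases lt_or_ge k K with hk | hk
    · rw [composeFrom_min_sub_of_lt f hk, Function.comp_apply, h, Function.comp_apply]
    · rwa [min_eq_right hk, Nat.sub_eq_zero_of_le hk,
        ← min_eq_right (hk.trans k.le_succ), ← Nat.sub_eq_zero_of_le (hk.trans k.le_succ)]

variable [MetricSpace E] [OpensMeasurableSpace E]

theorem exists_measurable_forall_mem_and_dist_le (S : Finset E) (r : ℝ) :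
    ∃ f : E → E, Measurable f ∧ ∀ x, (∃ y ∈ S, dist x y ≤ r) → f x ∈ S ∧ dist x (f x) ≤ r := by
  classical
  induction S using Finset.induction_on with
  | empty => exact ⟨id, measurable_id, by simp⟩
  | insert a S _ ih =>
    obtain ⟨f, hf, hfS⟩ := ih
    refine ⟨(Metric.closedBall a r).piecewise (fun _ => a) f,
      measurable_const.piecewise Metric.isClosed_closedBall.measurableSet hf, ?_⟩
    rintro x ⟨y, hy, hxy⟩
    by_cases hx : x ∈ Metric.closedBall a r
    · rw [Set.piecewise_eq_of_mem _ _ _ hx]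
      exact ⟨Finset.mem_insert_self a S, hx⟩
    · rw [Set.piecewise_eq_of_notMem _ _ _ hx]
      have hyS : y ∈ S := (Finset.mem_insert.1 hy).resolve_left fun h => hx (h ▸ hxy)
      exact (hfS x ⟨y, hyS, hxy⟩).imp_left Finset.mem_insert_of_mem

variable [BoundedSpace E]

theorem exists_refiningPartitions_of_covRadius_lt {m : ℕ → ℕ} (hm : ∀ k, 1 ≤ m k) {R : ℕ → ℝ}
    (hR : ∀ k, covRadius E (m k) < R k) (K : ℕ) :
    ∃ Q : RefiningPartitions E E, (∀ k ≤ K, (Q.labels k).card ≤ m k) ∧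
      (∀ k < K, ∀ x, edist (Q.label (k + 1) x) (Q.label k x) ≤ ENNReal.ofReal (R k)) ∧
      ∀ x, edist x (Q.label K x) ≤ ENNReal.ofReal (R K) := by
  choose S hS hcover using fun k => exists_finset_cover_of_covRadius_lt (hm k) (hR k)
  choose f hf hfS using fun k => exists_measurable_forall_mem_and_dist_le (S k) (R k)
  have hdist : ∀ k x, edist x (f k x) ≤ ENNReal.ofReal (R k) := fun k x => by
    rw [edist_dist]
    exact ofReal_le_ofReal (hfS k x (hcover k x)).2
  refine ⟨netPartitions hf (fun k x => (hfS k x (hcover k x)).1) K, fun k hk => ?_,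
    fun k hk x => ?_, fun x => ?_⟩
  · simpa only [netPartitions, min_eq_left hk] using hS k
  · simpa only [netPartitions, composeFrom_min_sub_of_lt f hk, Function.comp_apply] using hdist k _
  · simpa only [netPartitions, min_self, Nat.sub_self, composeFrom] using hdist K x

end Nets

section UpperBound

theorem ofReal_sqrt_rpow_one_div {x p : ℝ} (hx : 0 ≤ x) (hp : 0 ≤ p) :
    ENNReal.ofReal √x ^ (1 / p) = ENNReal.ofReal (x ^ (1 / (2 * p))) := by
  rw [ofReal_rpow_of_nonneg (Real.sqrt_nonneg _) (by positivity), Real.sqrt_eq_rpow,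
    ← Real.rpow_mul hx, one_div_mul_one_div]

theorem two_mul_rpow_le {x s : ℝ} (hx : 0 ≤ x) (hs : s ≤ 1) : (2 * x) ^ s ≤ 2 * x ^ s := by
  rw [Real.mul_rpow zero_le_two hx]
  gcongr
  exact Real.rpow_le_self_of_one_le one_le_two hs

theorem chainingBound_sqrt_two_pow_div_le {p : ℝ} (hp : 1 ≤ p) {n K : ℕ} (hn : 1 ≤ n)
    (hK : n ≤ 2 ^ (K + 1)) (r : ℕ → ℝ) :
    chainingBound p (fun k => ENNReal.ofReal (r k)) K
        (fun k => ENNReal.ofReal √((2 : ℝ) ^ k / n)) ≤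
      4 * ∑ k ∈ Finset.range (K + 1),
        ENNReal.ofReal (((2 : ℝ) ^ k / n) ^ (1 / (2 * p)) * r k) := by
  have hs : 1 / (2 * p) ≤ 1 := (div_le_one (by positivity)).2 (by linarith)
  have hstep : ∀ k : ℕ, ENNReal.ofReal (((2 : ℝ) ^ (k + 1) / n) ^ (1 / (2 * p))) ≤
      2 * ENNReal.ofReal (((2 : ℝ) ^ k / n) ^ (1 / (2 * p))) := fun k => by
    rw [← ofReal_ofNat 2, ← ofReal_mul zero_le_two, pow_succ', mul_div_assoc]
    exact ofReal_le_ofReal (two_mul_rpow_le (by positivity) hs)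
  have hlast : 1 ≤ 2 * ENNReal.ofReal (((2 : ℝ) ^ K / n) ^ (1 / (2 * p))) := by
    refine le_trans (one_le_ofReal.2 (Real.one_le_rpow ?_ (by positivity))) (hstep K)
    rw [one_le_div (by positivity)]
    exact_mod_cast hK
  have hfour : ∀ a b : ℝ≥0∞, 4 * (a * b) = 2 * b * (2 * a) := fun a b => by ring
  simp only [chainingBound, ofReal_sqrt_rpow_one_div (div_nonneg (pow_nonneg zero_le_two _)
    n.cast_nonneg) (zero_le_one.trans hp)]
  simp only [ofReal_mul (Real.rpow_nonneg (div_nonneg (pow_nonneg zero_le_two _)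
    n.cast_nonneg) _), Finset.mul_sum, hfour]
  rw [Finset.sum_range_succ, add_comm]
  refine add_le_add (Finset.sum_le_sum fun k _ => ?_) ?_
  · gcongr
    exact hstep k
  · exact le_mul_of_one_le_right zero_le hlast

variable {E : Type*} [MetricSpace E] [BoundedSpace E] [MeasurableSpace E]
  [OpensMeasurableSpace E] {p : ℝ} {n : ℕ}

theorem expWpPow_le_sum_of_covRadius_lt (hp : 1 ≤ p) (μ : Measure E) [IsProbabilityMeasure μ]
    (hn : 1 ≤ n) {r : ℕ → ℝ} (hr : ∀ k, covRadius E (2 ^ k) < r k) :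
    expWpPow p μ n ≤ 4 * ∑ k ∈ Finset.range (Nat.log 2 n + 1),
      ENNReal.ofReal (((2 : ℝ) ^ k / n) ^ (1 / (2 * p)) * r k) := by
  obtain ⟨Q, hcard, hstep, hlast⟩ :=
    exists_refiningPartitions_of_covRadius_lt (fun k => Nat.one_le_two_pow) hr (Nat.log 2 n)
  have hroot : ∀ x y, Q.label 0 x = Q.label 0 y := fun x y =>
    Finset.card_le_one.1 (hcard 0 zero_le) _ (Q.label_mem 0 x) _ (Q.label_mem 0 y)
  calc expWpPow p μ n
      ≤ chainingBound p (fun k => ENNReal.ofReal (r k)) (Nat.log 2 n)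
          fun k => ENNReal.ofReal √((Q.labels k).card / n) :=
        expWpPow_le_chainingBound Q hp hroot hstep hlast μ hn
    _ ≤ chainingBound p (fun k => ENNReal.ofReal (r k)) (Nat.log 2 n)
          fun k => ENNReal.ofReal √((2 : ℝ) ^ k / n) := by
        refine chainingBound_mono (by linarith) fun k hk => ?_
        gcongr
        exact_mod_cast hcard k hk
    _ ≤ _ := chainingBound_sqrt_two_pow_div_le hp hn
        (Nat.lt_pow_succ_log_self one_lt_two n).le r

theorem expWpPow_le_sum_covRadius (hp : 1 ≤ p) (μ : Measure E) [IsProbabilityMeasure μ]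
    (hn : 1 ≤ n) :
    expWpPow p μ n ≤ 4 * ∑ k ∈ Finset.range (Nat.log 2 n + 1),
      ENNReal.ofReal (((2 : ℝ) ^ k / n) ^ (1 / (2 * p)) * covRadius E (2 ^ k)) := by
  have hcont : Continuous fun ε : ℝ => 4 * ∑ k ∈ Finset.range (Nat.log 2 n + 1),
      ENNReal.ofReal (((2 : ℝ) ^ k / n) ^ (1 / (2 * p)) * (covRadius E (2 ^ k) + ε)) :=
    (ENNReal.continuous_const_mul (by norm_num)).comp <|
      continuous_finsetSum _ fun k _ => continuous_ofReal.comp (by fun_prop)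
  have hlim := (hcont.tendsto 0).mono_left (nhdsWithin_le_nhds (s := Set.Ioi 0))
  simp only [add_zero] at hlim
  refine ge_of_tendsto hlim ?_
  filter_upwards [self_mem_nhdsWithin] with ε hε
  exact expWpPow_le_sum_of_covRadius_lt hp μ hn fun k => lt_add_of_pos_right _ hε

end UpperBound

theorem stmt_7_general {E : Type*} [MetricSpace E] [BoundedSpace E] [MeasurableSpace E]
    [OpensMeasurableSpace E] {p : ℝ} (hp : 1 ≤ p) {n : ℕ} (hn : 1 ≤ n) :
    ENNReal.ofReal (1 / 4) *
        (⨆ k ∈ Finset.range (Nat.log 2 n + 1),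
          ENNReal.ofReal ((((2 : ℝ) ^ k / n) ^ (1 / (2 * p))) * covRadius E (2 ^ k)))
      ≤ (⨆ μ : {μ : Measure E // IsProbabilityMeasure μ ∧ HasFiniteMoment p μ},
          expWpPow p μ.1 n) ∧
    (⨆ μ : {μ : Measure E // IsProbabilityMeasure μ ∧ HasFiniteMoment p μ},
        expWpPow p μ.1 n)
      ≤ 4 * ∑ k ∈ Finset.range (Nat.log 2 n + 1),
            ENNReal.ofReal ((((2 : ℝ) ^ k / n) ^ (1 / (2 * p))) * covRadius E (2 ^ k)) := by
  constructor
  · simp only [ENNReal.mul_iSup, iSup_le_iff, ← ofReal_mul (show (0 : ℝ) ≤ 1 / 4 by norm_num)]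
    intro k hk
    have hkn : 2 ^ k ≤ n := Nat.pow_le_of_le_log (by omega) (Finset.mem_range_succ_iff.1 hk)
    simpa only [Nat.cast_pow, Nat.cast_ofNat] using
      ofReal_mul_covRadius_le_iSup_expWpPow (E := E) hp Nat.one_le_two_pow hkn
  · exact iSup_le fun ⟨μ, hμ, _⟩ => expWpPow_le_sum_covRadius hp μ hn

/-- **Corollary (supmu).** Let `(E, d_E)` be a compact metric space, `p ≥ 1` and
`n ∈ ℕ`. Then
`(1/4) max_{0 ≤ k ≤ ⌊log₂ n⌋} (2^k/n)^{1/(2p)} h(2^k)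
   ≤ sup_{μ ∈ 𝒫_p(E)} (𝔼[W_p(μ_n,μ)^p])^{1/p}
   ≤ 40 p ∑_{k=0}^{⌊log₂ n⌋} (2^k/n)^{1/(2p)} h(2^k)`. -/
theorem stmt_7 {E : Type*} [MetricSpace E] [CompactSpace E]
    [MeasurableSpace E] [BorelSpace E]
    (p : ℝ) (hp : 1 ≤ p) (n : ℕ) (hn : 1 ≤ n) :
    ENNReal.ofReal (1 / 4) *
        (⨆ k ∈ Finset.range (Nat.log 2 n + 1),
          ENNReal.ofReal ((((2 : ℝ) ^ k / n) ^ (1 / (2 * p))) * covRadius E (2 ^ k)))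
      ≤ (⨆ μ : {μ : Measure E // IsProbabilityMeasure μ ∧ HasFiniteMoment p μ},
          expWpPow p μ.1 n) ∧
    (⨆ μ : {μ : Measure E // IsProbabilityMeasure μ ∧ HasFiniteMoment p μ},
        expWpPow p μ.1 n)
      ≤ ENNReal.ofReal (40 * p) *
          ∑ k ∈ Finset.range (Nat.log 2 n + 1),
            ENNReal.ofReal ((((2 : ℝ) ^ k / n) ^ (1 / (2 * p))) * covRadius E (2 ^ k)) :=
  (stmt_7_general hp hn).imp_right fun h => h.trans <| by
    gcongr
    exact ofNat_le_ofReal.2 (by linarith)
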